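/- arXiv:2303.03390 — 4 statements merged into one kernel-verified Lean document; each statement's English description precedes it below -/
import Mathlib

section
/- Under the stated assumptions (in particular cL < 1, the Lipschitz condition |f(x,r) − f(x,s)| ≤ L sup_{b∈A}|r(b) − s(b)| for all x ∈ 𝕏 and r,s ∈ ℝ^A, the weight condition ∫_𝕏 sup_{b∈A} ω(y)(b) κ_a(x,dy) ≤ c ω(x)(a) for all x ∈ 𝕏, a ∈ A, and sup_{(t,b)∈𝕏×A} [ω(t)(b)^{-1} ∫_𝕏 |f(y,0)| κ_b(t,dy)] < ∞), there exists a unique v ∈ 𝒲 which satisfies for all x ∈ 𝕏 and a ∈ A that ∫_𝕏 |f(y, v(y))| κ_a(x,dy) < ∞ and v(x)(a) = ∫_𝕏 f(y, v(y)) κ_a(x,dy). -/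
open MeasureTheory ProbabilityTheory

/-!
The operator `(Φ u)(x)(a) = ∫ f(y, u(y)) κ_a(x, dy)` is a contraction with factor `q = cL` for the
weighted supremum norm `‖u‖ = sup_{x,a} |u(x)(a)| / w(x)(a)`: if `|u - v| ≤ K w`, the Lipschitz
condition bounds `|f(y, u(y)) - f(y, v(y))|` by `L K sup_b w(y)(b)`, whose `κ_a(x, ·)`-integral is at
most `c L K w(x)(a)` (`lintegral_diff_le`, `abs_bellman_sub_le`). Comparison with `u = 0` gives
integrability of `f(y, u(y))` for every `u` of finite norm (`integrable_comp`).

Instead of building the weighted Banach space, the Picard iterates `Φⁿ 0` are handled pointwise: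
consecutive iterates differ by at most `K qⁿ w`, so they converge at each `(x, a)`, the error is at
most `K qⁿ / (1 - q) w`, and the contraction estimate identifies the limit as a fixed point.
Uniqueness follows since two fixed points with `|u - v| ≤ K w` satisfy `|u - v| ≤ K qⁿ w` for all `n`.
-/

section Contraction

variable {𝕏 : Type*} [MeasurableSpace 𝕏] {A : Type*}

/-- The integral operator `(Φ u)(x)(a) = ∫ f(y, u(y)) κ_a(x, dy)`, whose fixed points are sought.
It takes the value `0` wherever the integrand is not integrable. -/
noncomputable def bellman (κ : A → Kernel 𝕏 𝕏) (f : 𝕏 → (A → ℝ) → ℝ) (u : 𝕏 → A → ℝ) :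
    𝕏 → A → ℝ :=
  fun x a => ∫ y, f y (u y) ∂(κ a x)

/-- The contraction estimate, in a form that presupposes no integrability. -/
lemma lintegral_diff_le {c L : ℝ} (hL : 0 ≤ L)
    {κ : A → Kernel 𝕏 𝕏} {f : 𝕏 → (A → ℝ) → ℝ} {w : 𝕏 → A → ℝ}
    (hf_lip : ∀ (x : 𝕏) (r s : A → ℝ),
      ENNReal.ofReal |f x r - f x s|
        ≤ ENNReal.ofReal L * ⨆ b : A, ENNReal.ofReal |r b - s b|)
    (hw_int : ∀ (x : 𝕏) (a : A),
      (∫⁻ y, (⨆ b : A, ENNReal.ofReal (w y b)) ∂(κ a x)) ≤ ENNReal.ofReal (c * w x a))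
    {u v : 𝕏 → A → ℝ} {K : ℝ} (hK : 0 ≤ K) (huv : ∀ x a, |u x a - v x a| ≤ K * w x a)
    (x : 𝕏) (a : A) :
    (∫⁻ y, ENNReal.ofReal |f y (u y) - f y (v y)| ∂(κ a x))
      ≤ ENNReal.ofReal (K * (c * L) * w x a) := by
  calc (∫⁻ y, ENNReal.ofReal |f y (u y) - f y (v y)| ∂(κ a x))
      ≤ ∫⁻ y, ENNReal.ofReal (L * K) * (⨆ b : A, ENNReal.ofReal (w y b)) ∂(κ a x) := by
        refine lintegral_mono fun y => (hf_lip y _ _).trans ?_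
        rw [ENNReal.ofReal_mul hL, mul_assoc]
        gcongr
        rw [ENNReal.mul_iSup]
        refine iSup_mono fun b => ?_
        rw [← ENNReal.ofReal_mul hK]
        exact ENNReal.ofReal_le_ofReal (huv y b)
    _ = ENNReal.ofReal (L * K) * ∫⁻ y, (⨆ b : A, ENNReal.ofReal (w y b)) ∂(κ a x) :=
        lintegral_const_mul' _ _ ENNReal.ofReal_ne_top
    _ ≤ ENNReal.ofReal (L * K) * ENNReal.ofReal (c * w x a) := by
        gcongr
        exact hw_int x a
    _ = ENNReal.ofReal (K * (c * L) * w x a) := by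
        rw [← ENNReal.ofReal_mul (mul_nonneg hL hK)]
        congr 1
        ring

lemma measurable_comp_section {f : 𝕏 → (A → ℝ) → ℝ}
    (hf : Measurable fun p : 𝕏 × (A → ℝ) => f p.1 p.2) {u : 𝕏 → A → ℝ} (hu : Measurable u) :
    Measurable fun y => f y (u y) :=
  hf.comp (measurable_id.prodMk hu)

lemma integrable_of_lintegral_abs_le {μ : Measure 𝕏} {g : 𝕏 → ℝ} (hg : Measurable g) {r : ℝ}
    (h : (∫⁻ y, ENNReal.ofReal |g y| ∂μ) ≤ ENNReal.ofReal r) : Integrable g μ := by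
  refine ⟨hg.aestronglyMeasurable, ?_⟩
  rw [hasFiniteIntegral_iff_norm]
  exact h.trans_lt ENNReal.ofReal_lt_top

lemma abs_integral_le_of_lintegral_abs_le {μ : Measure 𝕏} {g : 𝕏 → ℝ} {r : ℝ} (hr : 0 ≤ r)
    (h : (∫⁻ y, ENNReal.ofReal |g y| ∂μ) ≤ ENNReal.ofReal r) : |∫ y, g y ∂μ| ≤ r :=
  (norm_integral_le_lintegral_norm g).trans (ENNReal.toReal_le_of_le_ofReal hr h)

/-- For `u` of finite weighted norm, `f(y, u(y))` is integrable, by comparison with `f(y, 0)`. -/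
lemma integrable_comp {c L : ℝ} (hL : 0 ≤ L)
    {κ : A → Kernel 𝕏 𝕏} {f : 𝕏 → (A → ℝ) → ℝ} {w : 𝕏 → A → ℝ}
    (hf : Measurable fun p : 𝕏 × (A → ℝ) => f p.1 p.2)
    (hf_lip : ∀ (x : 𝕏) (r s : A → ℝ),
      ENNReal.ofReal |f x r - f x s|
        ≤ ENNReal.ofReal L * ⨆ b : A, ENNReal.ofReal |r b - s b|)
    (hw_int : ∀ (x : 𝕏) (a : A),
      (∫⁻ y, (⨆ b : A, ENNReal.ofReal (w y b)) ∂(κ a x)) ≤ ENNReal.ofReal (c * w x a))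
    {C : ℝ} (hf0 : ∀ (x : 𝕏) (a : A),
      (∫⁻ y, ENNReal.ofReal |f y 0| ∂(κ a x)) ≤ ENNReal.ofReal (C * w x a))
    {u : 𝕏 → A → ℝ} (hu : Measurable u) {K : ℝ} (hK : 0 ≤ K)
    (huK : ∀ x a, |u x a| ≤ K * w x a) (x : 𝕏) (a : A) :
    Integrable (fun y => f y (u y)) (κ a x) := by
  have h0 : Measurable fun y => f y 0 :=
    measurable_comp_section hf (u := fun _ => 0) measurable_const
  have hd := lintegral_diff_le hL hf_lip hw_int (u := u) (v := fun _ => 0) hK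
    (fun x a => by simpa using huK x a) x a
  have h1 := integrable_of_lintegral_abs_le ((measurable_comp_section hf hu).sub h0) hd
  have h2 := integrable_of_lintegral_abs_le h0 (hf0 x a)
  exact (h1.add h2).congr (Filter.Eventually.of_forall fun y => by simp)

/-- `Φ` contracts the weighted supremum distance by the factor `c L`. -/
lemma abs_bellman_sub_le {c L : ℝ} (hc : 0 ≤ c) (hL : 0 ≤ L)
    {κ : A → Kernel 𝕏 𝕏} {f : 𝕏 → (A → ℝ) → ℝ} {w : 𝕏 → A → ℝ}
    (hw_pos : ∀ x a, 0 < w x a)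
    (hf_lip : ∀ (x : 𝕏) (r s : A → ℝ),
      ENNReal.ofReal |f x r - f x s|
        ≤ ENNReal.ofReal L * ⨆ b : A, ENNReal.ofReal |r b - s b|)
    (hw_int : ∀ (x : 𝕏) (a : A),
      (∫⁻ y, (⨆ b : A, ENNReal.ofReal (w y b)) ∂(κ a x)) ≤ ENNReal.ofReal (c * w x a))
    {u v : 𝕏 → A → ℝ} {K : ℝ} (hK : 0 ≤ K) (huv : ∀ x a, |u x a - v x a| ≤ K * w x a)
    (hu : ∀ x a, Integrable (fun y => f y (u y)) (κ a x))
    (hv : ∀ x a, Integrable (fun y => f y (v y)) (κ a x)) (x : 𝕏) (a : A) :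
    |bellman κ f u x a - bellman κ f v x a| ≤ K * (c * L) * w x a := by
  rw [bellman, bellman, ← integral_sub (hu x a) (hv x a)]
  have := (hw_pos x a).le
  exact abs_integral_le_of_lintegral_abs_le (by positivity)
    (lintegral_diff_le hL hf_lip hw_int hK huv x a)

lemma measurable_bellman {κ : A → Kernel 𝕏 𝕏} {f : 𝕏 → (A → ℝ) → ℝ}
    (hf : Measurable fun p : 𝕏 × (A → ℝ) => f p.1 p.2) {u : 𝕏 → A → ℝ} (hu : Measurable u) :
    Measurable (bellman κ f u) :=
  measurable_pi_lambda _ fun a =>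
    (StronglyMeasurable.integral_kernel (κ := κ a)
      (measurable_comp_section hf hu).stronglyMeasurable).measurable

end Contraction

/-- Existence and uniqueness of solutions of functional fixed-point equations for families of
stochastic kernels (Lemma 2.2 of the paper).  Under `cL < 1`, the Lipschitz condition
`|f(x,r) − f(x,s)| ≤ L sup_{b∈A}|r(b) − s(b)|`, the weight condition
`∫ sup_b ω(y)(b) κ_a(x,dy) ≤ c ω(x)(a)`, and
`sup_{(t,b)} [ω(t)(b)⁻¹ ∫ |f(y,0)| κ_b(t,dy)] < ∞`, there is a unique `v ∈ 𝒲` with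
`∫ |f(y,v(y))| κ_a(x,dy) < ∞` and `v(x)(a) = ∫ f(y,v(y)) κ_a(x,dy)` for all `x, a`. -/
theorem stmt0
    {𝕏 : Type*} [MeasurableSpace 𝕏] [Nonempty 𝕏]
    {A : Type*} [Countable A] [Nonempty A]
    (c L : ℝ) (hc : 0 ≤ c) (hL : 0 ≤ L) (hcL : c * L < 1)
    (κ : A → ProbabilityTheory.Kernel 𝕏 𝕏) [∀ a, IsMarkovKernel (κ a)]
    (f : 𝕏 → (A → ℝ) → ℝ)
    (hf : Measurable fun p : 𝕏 × (A → ℝ) => f p.1 p.2)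
    (w : 𝕏 → A → ℝ) (hw_pos : ∀ x a, 0 < w x a) (hw_meas : Measurable w)
    (hf_lip : ∀ (x : 𝕏) (r s : A → ℝ),
      ENNReal.ofReal |f x r - f x s|
        ≤ ENNReal.ofReal L * ⨆ b : A, ENNReal.ofReal |r b - s b|)
    (hw_int : ∀ (x : 𝕏) (a : A),
      (∫⁻ y, (⨆ b : A, ENNReal.ofReal (w y b)) ∂(κ a x)) ≤ ENNReal.ofReal (c * w x a))
    (hf0 : ∃ C : ℝ, ∀ (x : 𝕏) (a : A),
      (∫⁻ y, ENNReal.ofReal |f y 0| ∂(κ a x)) ≤ ENNReal.ofReal (C * w x a)) :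
    ∃! v : 𝕏 → A → ℝ,
      (Measurable v ∧ ∃ C : ℝ, ∀ x a, |v x a| ≤ C * w x a) ∧
        ∀ x a, Integrable (fun y => f y (v y)) (κ a x) ∧
          v x a = ∫ y, f y (v y) ∂(κ a x) := by
  obtain ⟨C₀, hC₀⟩ := hf0
  -- A nonnegative bound on the weighted norm of `Φ 0`.
  obtain ⟨C, hC, hf0⟩ : ∃ C : ℝ, 0 ≤ C ∧ ∀ (x : 𝕏) (a : A),
      (∫⁻ y, ENNReal.ofReal |f y 0| ∂(κ a x)) ≤ ENNReal.ofReal (C * w x a) :=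
    ⟨max C₀ 0, le_max_right _ _, fun x a => (hC₀ x a).trans <| ENNReal.ofReal_le_ofReal <|
      mul_le_mul_of_nonneg_right (le_max_left _ _) (hw_pos x a).le⟩
  set q : ℝ := c * L with hq
  have hq0 : 0 ≤ q := mul_nonneg hc hL
  have hq1 : 0 < 1 - q := sub_pos.2 hcL
  have hint : ∀ {u : 𝕏 → A → ℝ} {K : ℝ}, Measurable u → (∀ x a, |u x a| ≤ K * w x a) →
      ∀ x a, Integrable (fun y => f y (u y)) (κ a x) := by
    intro u K hu hK
    refine integrable_comp hL hf hf_lip hw_int hf0 hu (le_max_right K 0) fun x a => ?_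
    exact (hK x a).trans (mul_le_mul_of_nonneg_right (le_max_left _ _) (hw_pos x a).le)
  have hpow : ∀ B : ℝ, Filter.Tendsto (fun n : ℕ => B * q ^ n) Filter.atTop (nhds 0) := fun B => by
    simpa using (tendsto_pow_atTop_nhds_zero_of_lt_one hq0 hcL).const_mul B
  let p : ℕ → 𝕏 → A → ℝ := fun n => (bellman κ f)^[n] 0
  have hp_succ : ∀ n, p (n + 1) = bellman κ f (p n) := fun n =>
    Function.iterate_succ_apply' _ _ _
  have hp0 : ∀ x a, p 0 x a = 0 := fun _ _ => rfl
  have hp_meas : ∀ n, Measurable (p n) := by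
    intro n
    induction n with
    | zero => exact measurable_const
    | succ n ih => rw [hp_succ]; exact measurable_bellman hf ih
  have hp1 : ∀ x a, |p 1 x a| ≤ C * w x a := fun x a =>
    abs_integral_le_of_lintegral_abs_le (mul_nonneg hC (hw_pos x a).le) (hf0 x a)
  -- The norm bound on the iterates is carried along, as the contraction estimate needs it
  -- for integrability.
  have hstep : ∀ n, (∃ K, ∀ x a, |p n x a| ≤ K * w x a) ∧
      ∀ x a, |p (n + 1) x a - p n x a| ≤ C * q ^ n * w x a := by
    intro n
    induction n with
    | zero =>
      exact ⟨⟨0, fun x a => by simp [hp0]⟩, fun x a => by simpa [hp0] using hp1 x a⟩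
    | succ n ih =>
      obtain ⟨⟨K, hK⟩, hd⟩ := ih
      have hK' : ∀ x a, |p (n + 1) x a| ≤ (C * q ^ n + K) * w x a := fun x a => by
        have h := abs_add_le (p (n + 1) x a - p n x a) (p n x a)
        rw [sub_add_cancel] at h
        linarith [hK x a, hd x a]
      refine ⟨⟨_, hK'⟩, fun x a => ?_⟩
      have h := abs_bellman_sub_le hc hL hw_pos hf_lip hw_int (mul_nonneg hC (pow_nonneg hq0 n)) hd
        (hint (hp_meas (n + 1)) hK') (hint (hp_meas n) hK) x a
      rw [← hp_succ, ← hp_succ, ← hq] at h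
      rwa [pow_succ, ← mul_assoc]
  have hdist : ∀ x a n, dist (p n x a) (p (n + 1) x a) ≤ C * w x a * q ^ n := fun x a n => by
    rw [dist_comm, Real.dist_eq, mul_right_comm]
    exact (hstep n).2 x a
  have hlim : ∀ x a, ∃ l, Filter.Tendsto (fun n => p n x a) Filter.atTop (nhds l) := fun x a =>
    cauchySeq_tendsto_of_complete (cauchySeq_of_le_geometric q _ hcL (hdist x a))
  choose v hv using hlim
  have hv_meas : Measurable v := measurable_pi_lambda _ fun a =>
    measurable_of_tendsto_metrizable (fun n => (measurable_pi_apply a).comp (hp_meas n))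
      (tendsto_pi_nhds.2 fun x => hv x a)
  have herr : ∀ n x a, |p n x a - v x a| ≤ C / (1 - q) * q ^ n * w x a := fun n x a => by
    have h := dist_le_of_le_geometric_of_tendsto q _ hcL (hdist x a) (hv x a) n
    rw [Real.dist_eq] at h
    refine h.trans_eq ?_
    ring
  have hv_bdd : ∀ x a, |v x a| ≤ C / (1 - q) * w x a := fun x a => by
    simpa [hp0] using herr 0 x a
  have hv_int := hint hv_meas hv_bdd
  have hv_fix : ∀ x a, v x a = bellman κ f v x a := by
    intro x a
    -- Both `v` and `Φ v` are limits of `Φⁿ⁺¹ 0`.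
    refine tendsto_nhds_unique ((Filter.tendsto_add_atTop_iff_nat 1).2 (hv x a)) ?_
    refine tendsto_iff_dist_tendsto_zero.2 <| squeeze_zero (fun _ => dist_nonneg) (fun n => ?_)
      (hpow (C / (1 - q) * q * w x a))
    obtain ⟨K, hK⟩ := (hstep n).1
    have h := abs_bellman_sub_le hc hL hw_pos hf_lip hw_int
      (mul_nonneg (div_nonneg hC hq1.le) (pow_nonneg hq0 n)) (herr n)
      (hint (hp_meas n) hK) hv_int x a
    rw [hp_succ, Real.dist_eq]
    refine h.trans_eq ?_
    rw [← hq]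
    ring
  refine ⟨v, ⟨⟨hv_meas, _, hv_bdd⟩, fun x a => ⟨hv_int x a, hv_fix x a⟩⟩, ?_⟩
  rintro u ⟨⟨-, D, hD⟩, hu⟩
  have hB : 0 ≤ |D| + C / (1 - q) := add_nonneg (abs_nonneg _) (div_nonneg hC hq1.le)
  have hcontr : ∀ n : ℕ, ∀ x a,
      |u x a - v x a| ≤ (|D| + C / (1 - q)) * q ^ n * w x a := by
    intro n
    induction n with
    | zero =>
      intro x a
      have h1 := abs_sub (u x a) (v x a)
      have h2 := mul_le_mul_of_nonneg_right (le_abs_self D) (hw_pos x a).le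
      rw [pow_zero, mul_one, add_mul]
      linarith [hD x a, hv_bdd x a]
    | succ n ih =>
      intro x a
      have h := abs_bellman_sub_le hc hL hw_pos hf_lip hw_int
        (mul_nonneg hB (pow_nonneg hq0 n)) ih (fun x a => (hu x a).1) hv_int x a
      rw [← hv_fix, ← hq, bellman, ← (hu x a).2] at h
      rwa [pow_succ, ← mul_assoc]
  funext x a
  refine eq_of_abs_sub_nonpos ?_
  refine ge_of_tendsto' (hpow ((|D| + C / (1 - q)) * w x a)) fun n => ?_
  rw [mul_right_comm]
  exact hcontr n x a
end

section
/- Under the stated assumptions (in particular c_ω L < 1, the Lipschitz condition |f(x,r) − f(x,s)| ≤ L sup_{b∈A}|r(b) − s(b)|, that sup_{(y,b)∈𝕏×A} [ω(y)(b)^{-1} |v(y)(b)|] < ∞, that (E[sup_{b∈A} |ω(X^{x,a})(b)|²])^{1/2} ≤ c_ω ω(x)(a), that (E[|f(X^{x,a},0)|²])^{1/2} ≤ c_f ω(x)(a), and that v(x)(a) = E[f(X^{x,a}, v(X^{x,a}))] for all (x,a) ∈ 𝕏 × A), it holds that sup_{(x,a)∈𝕏×A} |v(x)(a)|/ω(x)(a)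 ≤ c_f/(1 − c_ω L) and sup_{(x,a)∈𝕏×A} ω(x)(a)^{-1} (E[sup_{b∈A} |v(X^{x,a})(b)|²])^{1/2} ≤ c_f c_ω/(1 − c_ω L). -/
/-!
Let `S = sup |v| / w`, which is finite by assumption. The Lipschitz condition compares
`f(X, v(X))` with `f(X, 0)` at the cost `L * sup_b |v(X) b| ≤ L * S * sup_b w(X) b`. Taking
expectations in the fixed-point equation and bounding first moments by second moments
(`lintegral_le_of_lintegral_sq_le`) gives `|v x a| ≤ (cf + cω * L * S) * w x a`
(`abs_le_of_abs_le`), hence `S ≤ cf + cω * L * S`. Since `cω * L < 1`, this is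
`S ≤ cf / (1 - cω * L)`. The second estimate follows from the first by squaring
`sup_b |v(X) b| ≤ S * sup_b w(X) b` and integrating.
-/

open MeasureTheory ProbabilityTheory

/-- On a probability space the first moment is bounded by the square root of the second. -/
lemma lintegral_le_of_lintegral_sq_le {Ω : Type*} [MeasurableSpace Ω] (μ : Measure Ω)
    [IsProbabilityMeasure μ] {g : Ω → ENNReal} (hg : Measurable g) {c : ℝ} (hc : 0 ≤ c)
    (h : ∫⁻ ω, g ω ^ 2 ∂μ ≤ ENNReal.ofReal (c ^ 2)) :
    ∫⁻ ω, g ω ∂μ ≤ ENNReal.ofReal c := by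
  have hH := ENNReal.lintegral_mul_le_Lp_mul_Lq μ Real.HolderConjugate.two_two
    hg.aemeasurable (aemeasurable_const (b := (1 : ENNReal)))
  simp only [Pi.mul_apply, mul_one, ENNReal.one_rpow, one_pow, lintegral_const, measure_univ,
    ENNReal.rpow_two] at hH
  refine hH.trans ?_
  calc (∫⁻ ω, g ω ^ 2 ∂μ) ^ (1 / (2 : ℝ))
      ≤ (ENNReal.ofReal (c ^ 2)) ^ (1 / (2 : ℝ)) := by gcongr
    _ = ENNReal.ofReal c := by
      rw [ENNReal.ofReal_rpow_of_nonneg (by positivity) (by norm_num), ← Real.sqrt_eq_rpow,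
        Real.sqrt_sq hc]

/-- A pointwise bound by a multiple of the weight passes to the suprema over the index set. -/
lemma iSup_ofReal_abs_le {A : Type*} {u w : A → ℝ} {C : ℝ} (hC : 0 ≤ C)
    (h : ∀ b, |u b| ≤ C * w b) :
    ⨆ b, ENNReal.ofReal |u b| ≤ ENNReal.ofReal C * ⨆ b, ENNReal.ofReal (w b) := by
  refine iSup_le fun b => ?_
  calc ENNReal.ofReal |u b| ≤ ENNReal.ofReal (C * w b) := ENNReal.ofReal_le_ofReal (h b)
    _ = ENNReal.ofReal C * ENNReal.ofReal (w b) := ENNReal.ofReal_mul hC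
    _ ≤ _ := by
      gcongr
      exact le_iSup (fun b => ENNReal.ofReal (w b)) b

/-- One step of the fixed-point equation at a given `(x, a)`, with `Y` in the role of `X x a` and
`W` in the role of `w x a`: a weighted bound on `v` with constant `C` bounds the expectation with
constant `cf + cω * L * C`. -/
lemma abs_le_of_abs_le {𝕏 Ω A : Type*} [MeasurableSpace 𝕏] [MeasurableSpace Ω] [Countable A]
    (μ : Measure Ω) [IsProbabilityMeasure μ] {cf cω L C W : ℝ}
    (hcf : 0 ≤ cf) (hcω : 0 ≤ cω) (hL : 0 ≤ L) (hC : 0 ≤ C) (hW : 0 ≤ W)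
    {Y : Ω → 𝕏} (hY : Measurable Y) {f : 𝕏 → (A → ℝ) → ℝ}
    (hf : Measurable fun p : 𝕏 × (A → ℝ) => f p.1 p.2)
    {w v : 𝕏 → A → ℝ} (hw_meas : Measurable w)
    (hf_lip : ∀ (x : 𝕏) (r s : A → ℝ),
      ENNReal.ofReal |f x r - f x s|
        ≤ ENNReal.ofReal L * ⨆ b : A, ENNReal.ofReal |r b - s b|)
    (hv_bd : ∀ x a, |v x a| ≤ C * w x a)
    (hw_mom : (∫⁻ ω, (⨆ b : A, ENNReal.ofReal (w (Y ω) b)) ^ 2 ∂μ)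
      ≤ ENNReal.ofReal ((cω * W) ^ 2))
    (hf0_mom : (∫⁻ ω, ENNReal.ofReal (|f (Y ω) 0| ^ 2) ∂μ) ≤ ENNReal.ofReal ((cf * W) ^ 2)) :
    |∫ ω, f (Y ω) (v (Y ω)) ∂μ| ≤ (cf + cω * L * C) * W := by
  have hm0 : Measurable fun ω => ENNReal.ofReal |f (Y ω) 0| := by
    have h : Measurable fun ω => f (Y ω) 0 := hf.comp (hY.prodMk measurable_const)
    exact (measurable_abs.comp h).ennreal_ofReal
  have hmw : Measurable fun ω => ⨆ b : A, ENNReal.ofReal (w (Y ω) b) :=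
    Measurable.iSup fun b => ((measurable_pi_apply b).comp (hw_meas.comp hY)).ennreal_ofReal
  have h1 : ∫⁻ ω, ENNReal.ofReal |f (Y ω) 0| ∂μ ≤ ENNReal.ofReal (cf * W) := by
    refine lintegral_le_of_lintegral_sq_le μ hm0 (by positivity) ?_
    simpa only [ENNReal.ofReal_pow (abs_nonneg _)] using hf0_mom
  have h2 : ∫⁻ ω, ⨆ b : A, ENNReal.ofReal (w (Y ω) b) ∂μ ≤ ENNReal.ofReal (cω * W) :=
    lintegral_le_of_lintegral_sq_le μ hmw (by positivity) hw_mom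
  have hpt : ∀ ω, ‖f (Y ω) (v (Y ω))‖ₑ ≤ ENNReal.ofReal |f (Y ω) 0|
      + ENNReal.ofReal (L * C) * ⨆ b : A, ENNReal.ofReal (w (Y ω) b) := by
    intro ω
    have hlip : ENNReal.ofReal |f (Y ω) (v (Y ω)) - f (Y ω) 0|
        ≤ ENNReal.ofReal (L * C) * ⨆ b : A, ENNReal.ofReal (w (Y ω) b) := by
      refine (hf_lip _ _ _).trans ?_
      rw [ENNReal.ofReal_mul hL, mul_assoc]
      gcongr
      simpa using iSup_ofReal_abs_le hC (hv_bd (Y ω))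
    rw [Real.enorm_eq_ofReal_abs]
    refine le_trans ?_ (add_le_add_right hlip _)
    rw [← ENNReal.ofReal_add (abs_nonneg _) (abs_nonneg _)]
    refine ENNReal.ofReal_le_ofReal ?_
    have := abs_add_le (f (Y ω) 0) (f (Y ω) (v (Y ω)) - f (Y ω) 0)
    simpa using this
  have hmain : ENNReal.ofReal |∫ ω, f (Y ω) (v (Y ω)) ∂μ|
      ≤ ENNReal.ofReal ((cf + cω * L * C) * W) := by
    calc ENNReal.ofReal |∫ ω, f (Y ω) (v (Y ω)) ∂μ|
        = ‖∫ ω, f (Y ω) (v (Y ω)) ∂μ‖ₑ := (Real.enorm_eq_ofReal_abs _).symm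
      _ ≤ ∫⁻ ω, ‖f (Y ω) (v (Y ω))‖ₑ ∂μ := enorm_integral_le_lintegral_enorm _
      _ ≤ ∫⁻ ω, (ENNReal.ofReal |f (Y ω) 0|
            + ENNReal.ofReal (L * C) * ⨆ b : A, ENNReal.ofReal (w (Y ω) b)) ∂μ :=
          lintegral_mono hpt
      _ = ∫⁻ ω, ENNReal.ofReal |f (Y ω) 0| ∂μ
            + ENNReal.ofReal (L * C) * ∫⁻ ω, ⨆ b : A, ENNReal.ofReal (w (Y ω) b) ∂μ := by
          rw [lintegral_add_left hm0, lintegral_const_mul _ hmw]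
      _ ≤ ENNReal.ofReal (cf * W) + ENNReal.ofReal (L * C) * ENNReal.ofReal (cω * W) := by
          gcongr
      _ = ENNReal.ofReal ((cf + cω * L * C) * W) := by
          rw [← ENNReal.ofReal_mul (by positivity),
            ← ENNReal.ofReal_add (by positivity) (by positivity)]
          congr 1
          ring
  exact (ENNReal.ofReal_le_ofReal_iff (by positivity)).1 hmain

/-- A priori estimates for solutions of functional fixed-point equations
(Lemma 2.4 of the paper).  Under `c_ω L < 1`, the Lipschitz condition, boundedness of
`v` relative to the weight `ω`, the second-moment bounds
`(E[sup_b |ω(X^{x,a})(b)|²])^{1/2} ≤ c_ω ω(x)(a)` and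
`(E[|f(X^{x,a},0)|²])^{1/2} ≤ c_f ω(x)(a)`, and the fixed-point property
`v(x)(a) = E[f(X^{x,a}, v(X^{x,a}))]`, one has
`sup_{(x,a)} |v(x)(a)|/ω(x)(a) ≤ c_f/(1 − c_ω L)` and
`sup_{(x,a)} ω(x)(a)⁻¹ (E[sup_b |v(X^{x,a})(b)|²])^{1/2} ≤ c_f c_ω/(1 − c_ω L)`. -/
theorem stmt3
    {𝕏 : Type*} [mX : MeasurableSpace 𝕏] [Nonempty 𝕏]
    {Ω : Type*} [mΩ : MeasurableSpace Ω] (μ : Measure Ω) [IsProbabilityMeasure μ]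
    {A : Type*} [Countable A] [Nonempty A]
    (cf cω L : ℝ) (hcf : 0 ≤ cf) (hcω : 0 ≤ cω) (hL : 0 ≤ L) (hcωL : cω * L < 1)
    (X : 𝕏 → A → Ω → 𝕏)
    (hX : Measurable fun p : 𝕏 × Ω => fun a : A => X p.1 a p.2)
    (f : 𝕏 → (A → ℝ) → ℝ)
    (hf : Measurable fun p : 𝕏 × (A → ℝ) => f p.1 p.2)
    (w : 𝕏 → A → ℝ) (hw_pos : ∀ x a, 0 < w x a) (hw_meas : Measurable w)
    (v : 𝕏 → A → ℝ) (hv_meas : Measurable v)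
    (hf_lip : ∀ (x : 𝕏) (r s : A → ℝ),
      ENNReal.ofReal |f x r - f x s|
        ≤ ENNReal.ofReal L * ⨆ b : A, ENNReal.ofReal |r b - s b|)
    (hv_bd : ∃ C : ℝ, ∀ x a, |v x a| ≤ C * w x a)
    (hw_mom : ∀ (x : 𝕏) (a : A),
      (∫⁻ ω, (⨆ b : A, ENNReal.ofReal (w (X x a ω) b)) ^ 2 ∂μ)
        ≤ ENNReal.ofReal ((cω * w x a) ^ 2))
    (hf0_mom : ∀ (x : 𝕏) (a : A),
      (∫⁻ ω, ENNReal.ofReal (|f (X x a ω) 0| ^ 2) ∂μ) ≤ ENNReal.ofReal ((cf * w x a) ^ 2))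
    (hv_fix : ∀ x a, v x a = ∫ ω, f (X x a ω) (v (X x a ω)) ∂μ) :
    (∀ x a, |v x a| / w x a ≤ cf / (1 - cω * L)) ∧
      ∀ x a,
        (∫⁻ ω, (⨆ b : A, ENNReal.ofReal |v (X x a ω) b|) ^ 2 ∂μ)
          ≤ ENNReal.ofReal ((cf * cω / (1 - cω * L) * w x a) ^ 2) := by
  have hd : 0 < 1 - cω * L := by linarith
  have hXm : ∀ x a, Measurable (X x a) := fun x a =>
    (measurable_pi_apply a).comp (hX.comp (measurable_const.prodMk measurable_id))
  have hbdd : BddAbove (Set.range fun p : 𝕏 × A => |v p.1 p.2| / w p.1 p.2) := by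
    obtain ⟨C, hC⟩ := hv_bd
    refine ⟨C, ?_⟩
    rintro _ ⟨p, rfl⟩
    exact (div_le_iff₀ (hw_pos _ _)).2 (hC _ _)
  set S : ℝ := ⨆ p : 𝕏 × A, |v p.1 p.2| / w p.1 p.2 with hS
  have hS0 : 0 ≤ S := Real.iSup_nonneg fun p => div_nonneg (abs_nonneg _) (hw_pos _ _).le
  have hvS : ∀ x a, |v x a| ≤ S * w x a := fun x a =>
    (div_le_iff₀ (hw_pos x a)).1 (le_ciSup hbdd (x, a))
  have hstep : S ≤ cf + cω * L * S := by
    refine ciSup_le fun p => (div_le_iff₀ (hw_pos _ _)).2 ?_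
    rw [hv_fix p.1 p.2]
    exact abs_le_of_abs_le μ hcf hcω hL hS0 (hw_pos _ _).le (hXm _ _) hf hw_meas hf_lip hvS
      (hw_mom _ _) (hf0_mom _ _)
  have hSK : S ≤ cf / (1 - cω * L) := (le_div_iff₀ hd).2 (by linarith)
  have hvK : ∀ x a, |v x a| ≤ cf / (1 - cω * L) * w x a := fun x a =>
    (hvS x a).trans (mul_le_mul_of_nonneg_right hSK (hw_pos x a).le)
  refine ⟨fun x a => (div_le_iff₀ (hw_pos x a)).2 (hvK x a), fun x a => ?_⟩
  set K : ℝ := cf / (1 - cω * L) with hK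
  have hK0 : 0 ≤ K := hS0.trans hSK
  calc ∫⁻ ω, (⨆ b : A, ENNReal.ofReal |v (X x a ω) b|) ^ 2 ∂μ
      ≤ ∫⁻ ω, ENNReal.ofReal (K ^ 2) * (⨆ b : A, ENNReal.ofReal (w (X x a ω) b)) ^ 2 ∂μ := by
        refine lintegral_mono fun ω => ?_
        rw [ENNReal.ofReal_pow hK0, ← mul_pow]
        gcongr
        exact iSup_ofReal_abs_le hK0 (hvK (X x a ω))
    _ = ENNReal.ofReal (K ^ 2) * ∫⁻ ω, (⨆ b : A, ENNReal.ofReal (w (X x a ω) b)) ^ 2 ∂μ :=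
        lintegral_const_mul' _ _ ENNReal.ofReal_ne_top
    _ ≤ ENNReal.ofReal (K ^ 2) * ENNReal.ofReal ((cω * w x a) ^ 2) := by
        gcongr
        exact hw_mom x a
    _ = ENNReal.ofReal ((cf * cω / (1 - cω * L) * w x a) ^ 2) := by
        rw [← ENNReal.ofReal_mul (by positivity), hK]
        congr 1
        ring
end

section
/- In the MLFP setting it holds for all n ∈ ℕ₀ and θ ∈ Θ that V_n^θ is (𝒳 ⊗ σ(⋃_{η∈Θ} ℱ^{(θ,η)}))/𝒜-measurable, and for all n ∈ ℕ₀ and θ, ϑ ∈ Θ the map (x,ω) ↦ [a ↦ f(X^{θ,x,a}(ω), V_n^ϑ(X^{θ,x,a}(ω), ω))] from 𝕏 × Ω to ℝ^A is (𝒳 ⊗ σ(⋃_{η∈Θ} ℱ^{(ϑ,η)} ∪ ℱ^θ))/𝒜-measurable. -/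
/-!
Evaluating a jointly measurable random field `W` at a jointly measurable random point `Y` is a
composition of measurable maps, so `f (Y, W (Y))` is measurable with respect to any σ-algebra on `Ω`
that makes both `Y` and `W` jointly measurable (`measurable_comp_field`). The measurability of `V n θ`
then follows by strong induction on `n`, simultaneously in all `θ`: every index on the right-hand
side of the recursion is a proper extension of `θ`, so the σ-algebras involved are all contained in
`extSigma F θ`. The second assertion is the composition lemma once more.
-/

open MeasureTheory ProbabilityTheory

/-- The σ-algebra `σ(⋃_η ℱ^{(θ,η)})` generated by all proper extensions of the index `θ`. -/
abbrev extSigma {Ω : Type*} (F : List ℤ → MeasurableSpace Ω) (θ : List ℤ) : MeasurableSpace Ω :=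
  ⨆ (η : List ℤ) (_ : η ≠ []), F (θ ++ η)

theorem le_extSigma {Ω : Type*} (F : List ℤ → MeasurableSpace Ω) (θ : List ℤ) {η : List ℤ}
    (hη : η ≠ []) : F (θ ++ η) ≤ extSigma F θ :=
  le_iSup₂_of_le η hη le_rfl

theorem extSigma_append_le {Ω : Type*} (F : List ℤ → MeasurableSpace Ω) (θ η : List ℤ) :
    extSigma F (θ ++ η) ≤ extSigma F θ := by
  refine iSup₂_le fun ζ hζ => ?_
  rw [List.append_assoc]
  exact le_extSigma F θ (by simp [hζ])

theorem measurable_prod_mono {𝕏 Ω β : Type*} [mX : MeasurableSpace 𝕏] [MeasurableSpace β]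
    {m₁ m₂ : MeasurableSpace Ω} (h : m₁ ≤ m₂) {g : 𝕏 × Ω → β}
    (hg : @Measurable _ _ (mX.prod m₁) _ g) : @Measurable _ _ (mX.prod m₂) _ g :=
  hg.mono (sup_le_sup le_rfl (MeasurableSpace.comap_mono h)) le_rfl

/-- Evaluating a jointly measurable field `W` at the jointly measurable random points `Y a`, and
applying `f`, gives a jointly measurable field. -/
theorem measurable_comp_field {𝕏 Ω A : Type*} [MeasurableSpace 𝕏] [MeasurableSpace Ω]
    {f : 𝕏 → (A → ℝ) → ℝ} (hf : Measurable fun p : 𝕏 × (A → ℝ) => f p.1 p.2)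
    {Y : 𝕏 → A → Ω → 𝕏} (hY : Measurable fun p : 𝕏 × Ω => fun a => Y p.1 a p.2)
    {W : 𝕏 → A → Ω → ℝ} (hW : Measurable fun p : 𝕏 × Ω => fun a => W p.1 a p.2) :
    Measurable fun p : 𝕏 × Ω => fun a =>
      f (Y p.1 a p.2) (fun b => W (Y p.1 a p.2) b p.2) := by
  refine measurable_pi_lambda _ fun a => ?_
  have hYa : Measurable fun p : 𝕏 × Ω => Y p.1 a p.2 := (measurable_pi_apply a).comp hY
  exact hf.comp (hYa.prodMk (hW.comp (hYa.prodMk measurable_snd)))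

/-- Measurability properties of the MLFP approximations (Lemma 3.2 of the paper).  In the MLFP
setting (the index set `Θ = ⋃_n ℤ^n` is modelled by `List ℤ`, `(θ,l,i)` by `θ ++ [l,i]`, and
the distinguished index `0 ∈ Θ` by `[0]`), for all `n ∈ ℕ₀` and `θ ∈ Θ` the map `V_n^θ` is
`(𝒳 ⊗ σ(⋃_{η∈Θ} ℱ^{(θ,η)}))/𝒜`-measurable, and for all `n ∈ ℕ₀`, `θ, ϑ ∈ Θ` the map
`(x,ω) ↦ [a ↦ f(X^{θ,x,a}(ω), V_n^ϑ(X^{θ,x,a}(ω), ω))]` is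
`(𝒳 ⊗ σ(⋃_{η∈Θ} ℱ^{(ϑ,η)} ∪ ℱ^θ))/𝒜`-measurable. -/
theorem stmt4
    {𝕏 : Type*} [mX : MeasurableSpace 𝕏] [Nonempty 𝕏]
    {Ω : Type*} [mΩ : MeasurableSpace Ω] (μ : Measure Ω) [IsProbabilityMeasure μ]
    {A : Type*} [Nonempty A]
    (M : ℕ)
    (F : List ℤ → MeasurableSpace Ω) (hFsub : ∀ θ, F θ ≤ mΩ)
    (hFindep : iIndep F μ)
    (f : 𝕏 → (A → ℝ) → ℝ)
    (hf : Measurable fun p : 𝕏 × (A → ℝ) => f p.1 p.2)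
    (X : List ℤ → 𝕏 → A → Ω → 𝕏)
    (hXmeas : ∀ θ : List ℤ,
      @Measurable (𝕏 × Ω) (A → 𝕏) (mX.prod (F θ)) MeasurableSpace.pi
        fun p => fun a => X θ p.1 a p.2)
    (hXid : ∀ θ η : List ℤ,
      Measure.map (fun ω => fun p : 𝕏 × A => X θ p.1 p.2 ω) μ
        = Measure.map (fun ω => fun p : 𝕏 × A => X η p.1 p.2 ω) μ)
    (V : ℕ → List ℤ → 𝕏 → A → Ω → ℝ)
    (hV : ∀ (n : ℕ) (θ : List ℤ) (x : 𝕏) (a : A) (ω : Ω),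
      V n θ x a ω =
        ∑ l ∈ Finset.range n, ((M : ℝ) ^ (n - l))⁻¹ *
          ∑ i ∈ Finset.range (M ^ (n - l)),
            (f (X (θ ++ [(l : ℤ), (i : ℤ) + 1]) x a ω)
                (fun b => V l (θ ++ [(l : ℤ), (i : ℤ) + 1])
                  (X (θ ++ [(l : ℤ), (i : ℤ) + 1]) x a ω) b ω)
              - if l = 0 then 0 else
                f (X (θ ++ [(l : ℤ), (i : ℤ) + 1]) x a ω)
                  (fun b => V (l - 1) (θ ++ [-(l : ℤ), (i : ℤ) + 1])
                    (X (θ ++ [(l : ℤ), (i : ℤ) + 1]) x a ω) b ω))) :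
    (∀ (n : ℕ) (θ : List ℤ),
      @Measurable (𝕏 × Ω) (A → ℝ)
        (mX.prod (⨆ (η : List ℤ) (_ : η ≠ []), F (θ ++ η))) MeasurableSpace.pi
        fun p => fun a => V n θ p.1 a p.2) ∧
    ∀ (n : ℕ) (θ ϑ : List ℤ),
      @Measurable (𝕏 × Ω) (A → ℝ)
        (mX.prod ((⨆ (η : List ℤ) (_ : η ≠ []), F (ϑ ++ η)) ⊔ F θ)) MeasurableSpace.pi
        fun p => fun a => f (X θ p.1 a p.2) (fun b => V n ϑ (X θ p.1 a p.2) b p.2) := by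
  have key : ∀ (n : ℕ) (θ : List ℤ),
      @Measurable (𝕏 × Ω) (A → ℝ) (mX.prod (extSigma F θ)) MeasurableSpace.pi
        fun p => fun a => V n θ p.1 a p.2 := by
    intro n
    induction n using Nat.strong_induction_on with
    | _ n ih =>
      intro θ
      -- Each summand pairs a position index `θ ++ η` with a value index `θ ++ ζ`; these may differ.
      have step : ∀ k < n, ∀ η ζ : List ℤ, η ≠ [] → ∀ a : A,
          @Measurable (𝕏 × Ω) ℝ (mX.prod (extSigma F θ)) _ fun p =>
            f (X (θ ++ η) p.1 a p.2)
              (fun b => V k (θ ++ ζ) (X (θ ++ η) p.1 a p.2) b p.2) := by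
        intro k hk η ζ hη a
        letI : MeasurableSpace Ω := extSigma F θ
        exact (measurable_pi_apply a).comp (measurable_comp_field hf
          (measurable_prod_mono (le_extSigma F θ hη) (hXmeas (θ ++ η)))
          (measurable_prod_mono (extSigma_append_le F θ ζ) (ih k hk (θ ++ ζ))))
      letI : MeasurableSpace Ω := extSigma F θ
      refine measurable_pi_lambda _ fun a => ?_
      simp only [hV n θ]
      refine Finset.measurable_sum _ fun l hl => Measurable.const_mul
        (Finset.measurable_sum _ fun i _ => ?_) _
      have hl : l < n := Finset.mem_range.mp hl
      refine (step l hl _ _ (by simp) a).sub ?_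
      split_ifs
      · exact measurable_const
      · exact step (l - 1) (by omega) _ _ (by simp) a
  refine ⟨key, fun n θ ϑ => ?_⟩
  letI : MeasurableSpace Ω := extSigma F ϑ ⊔ F θ
  exact measurable_comp_field hf (measurable_prod_mono le_sup_right (hXmeas θ))
    (measurable_prod_mono le_sup_left (key n ϑ))
end

section
/- In the MLFP setting it holds for every n ∈ ℕ₀ that the random fields V_n^θ, θ ∈ Θ, are identically distributed. -/
/-!
The law of `V_n^θ` is determined by strong induction on `n`. By construction `V_n^θ` only uses the
noise attached to strict descendants of `θ`, and it is jointly measurable in the space variable and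
that noise (`measurable_V`). A summand of `V_n^θ` is `U(X(x, a))`, where `X = X^{(θ,l,i)}` and
`U(y) = f(y, V_l^{(θ,l,i)}(y)) - 1_ℕ(l) f(y, V_{l-1}^{(θ,-l,i)}(y))`. Three kinds of independence,
all consequences of disjointness of sets of indices, enter:

* for `l ≥ 1` the fields `V_l^{(θ,l,i)}` and `V_{l-1}^{(θ,-l,i)}` are independent, so by induction
  the law of `U` does not depend on `θ`;
* `U` is independent of `X`, so the law of `U(X)` depends only on the laws of `U` and of `X`
  (`map_comp_congr`);
* the summands with different labels `(l, i)` are independent, so the law of the sum depends only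
  on their individual laws (`map_sum_congr`).

The second point is delicate because evaluation `(u, y) ↦ u(y)` is not measurable on the product
space `ℝ^𝕏 × 𝕏`. Joint measurability of `U` permits decoupling `X` and `U` onto a product of two
probability spaces. Once either of the two outcomes is frozen, `U(X)` becomes a measurable function
of the other field, as measurability into a product space is coordinatewise, so the two laws can be
exchanged one after the other with Tonelli's theorem.
-/

open MeasureTheory ProbabilityTheory

namespace MLFP

/-! ### Laws of pairs and of random fields at random points -/

lemma map_pair_congr {Ω : Type*} {mΩ : MeasurableSpace Ω} {μ : Measure Ω} [IsProbabilityMeasure μ]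
    {α β : Type*} [MeasurableSpace α] [MeasurableSpace β]
    {Y Y' : Ω → α} {Z Z' : Ω → β} (hY : Measurable Y) (hZ : Measurable Z)
    (hY' : Measurable Y') (hZ' : Measurable Z')
    (h : IndepFun Y Z μ) (h' : IndepFun Y' Z' μ)
    (eY : μ.map Y = μ.map Y') (eZ : μ.map Z = μ.map Z') :
    μ.map (fun ω => (Y ω, Z ω)) = μ.map (fun ω => (Y' ω, Z' ω)) := by
  rw [(indepFun_iff_map_prod_eq_prod_map_map hY.aemeasurable hZ.aemeasurable).1 h,
    (indepFun_iff_map_prod_eq_prod_map_map hY'.aemeasurable hZ'.aemeasurable).1 h', eY, eZ]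

/-- Equality in law is preserved by a measurable function `g`. -/
lemma map_congr_comp {Ω : Type*} {mΩ : MeasurableSpace Ω} {μ : Measure Ω}
    {α β : Type*} [MeasurableSpace α] [MeasurableSpace β]
    {Y Y' : Ω → α} (hY : Measurable Y) (hY' : Measurable Y') (e : μ.map Y = μ.map Y')
    {g : α → β} (hg : Measurable g) :
    μ.map (fun ω => g (Y ω)) = μ.map (fun ω => g (Y' ω)) := by
  have h1 := Measure.map_map (μ := μ) hg hY
  have h2 := Measure.map_map (μ := μ) hg hY'
  rw [e, h2] at h1
  exact h1.symm

lemma indepFun_of_indep {Ω : Type*} {H G mΩ : MeasurableSpace Ω} {μ : Measure Ω}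
    {α β : Type*} [MeasurableSpace α] [MeasurableSpace β] (h : Indep H G μ) {Y : Ω → α} {Z : Ω → β}
    (hY : Measurable[H] Y) (hZ : Measurable[G] Z) : IndepFun Y Z μ := by
  rw [IndepFun_iff_Indep]
  exact indep_of_indep_of_le_left (indep_of_indep_of_le_right h hZ.comap_le) hY.comap_le

lemma measurable_decoupled {β γ T E R : Type*} [MeasurableSpace β] [MeasurableSpace γ]
    [MeasurableSpace E] [MeasurableSpace R] {X : T → β → E} {U : E → γ → R}
    (hX : ∀ p, Measurable (X p)) (hU : Measurable fun q : E × γ => U q.1 q.2) :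
    Measurable (fun (z : β × γ) p => U (X p z.1) z.2) :=
  measurable_pi_lambda _ fun p =>
    hU.comp (((hX p).comp measurable_fst).prodMk measurable_snd)

/-- A random field `U` read off at random points `X`, the two living on separate factors of a
product space: the law of `(U (X p))_p` depends only on the law of `X` and the law of `U`.
Freezing one factor turns the field into a coordinatewise measurable function of the other,
so each law can be exchanged in turn by Tonelli. -/
lemma map_prod_comp_congr {β γ β' γ' T E R : Type*}
    [MeasurableSpace β] [MeasurableSpace γ] [MeasurableSpace β'] [MeasurableSpace γ']
    [MeasurableSpace E] [MeasurableSpace R]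
    (P : Measure β) (Q : Measure γ) (P' : Measure β') (Q' : Measure γ')
    [IsProbabilityMeasure P] [IsProbabilityMeasure Q]
    [IsProbabilityMeasure P'] [IsProbabilityMeasure Q']
    {X : T → β → E} {X' : T → β' → E} {U : E → γ → R} {U' : E → γ' → R}
    (hX : ∀ p, Measurable (X p)) (hX' : ∀ p, Measurable (X' p))
    (hU : Measurable fun q : E × γ => U q.1 q.2) (hU' : Measurable fun q : E × γ' => U' q.1 q.2)
    (eX : P.map (fun b p => X p b) = P'.map (fun b p => X' p b))
    (eU : Q.map (fun c x => U x c) = Q'.map (fun c x => U' x c)) :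
    (P.prod Q).map (fun z p => U (X p z.1) z.2)
      = (P'.prod Q').map (fun z p => U' (X' p z.1) z.2) := by
  have m1 : Measurable (fun (c : γ) x => U x c) :=
    measurable_pi_lambda _ fun x => hU.comp measurable_prodMk_left
  have m1' : Measurable (fun (c : γ') x => U' x c) :=
    measurable_pi_lambda _ fun x => hU'.comp measurable_prodMk_left
  have m2' : Measurable (fun (b : β') p => X' p b) := measurable_pi_lambda _ hX'
  have m2 : Measurable (fun (b : β) p => X p b) := measurable_pi_lambda _ hX
  -- the law of `U` is replaced by that of `U'`, for each fixed value of the first factor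
  have step1 : (P.prod Q).map (fun z p => U (X p z.1) z.2)
      = (P.prod Q').map (fun z p => U' (X p z.1) z.2) := by
    ext S hS
    rw [Measure.map_apply (measurable_decoupled hX hU) hS,
      Measure.map_apply (measurable_decoupled hX hU') hS,
      Measure.prod_apply ((measurable_decoupled hX hU) hS),
      Measure.prod_apply ((measurable_decoupled hX hU') hS)]
    refine lintegral_congr fun b => ?_
    have hg : Measurable (fun (u : E → R) p => u (X p b)) :=
      measurable_pi_lambda _ fun p => measurable_pi_apply _
    have h := congrArg (fun ν => ν ((fun (u : E → R) p => u (X p b)) ⁻¹' S)) eU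
    simp only [Measure.map_apply m1 (hg hS), Measure.map_apply m1' (hg hS)] at h
    exact h
  -- the law of `X` is replaced by that of `X'`, for each fixed value of the second factor
  have step2 : (P.prod Q').map (fun z p => U' (X p z.1) z.2)
      = (P'.prod Q').map (fun z p => U' (X' p z.1) z.2) := by
    ext S hS
    rw [Measure.map_apply (measurable_decoupled hX hU') hS,
      Measure.map_apply (measurable_decoupled hX' hU') hS,
      Measure.prod_apply_symm ((measurable_decoupled hX hU') hS),
      Measure.prod_apply_symm ((measurable_decoupled hX' hU') hS)]
    refine lintegral_congr fun c => ?_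
    have hg : Measurable (fun (y : T → E) p => U' (y p) c) :=
      measurable_pi_lambda _ fun p =>
        (hU'.comp measurable_prodMk_right).comp (measurable_pi_apply p)
    have h := congrArg (fun ν => ν ((fun (y : T → E) p => U' (y p) c) ⁻¹' S)) eX
    simp only [Measure.map_apply m2 (hg hS), Measure.map_apply m2' (hg hS)] at h
    exact h
  exact step1.trans step2

/-- The law of `ω ↦ (U (X p (B ω)) (C ω))_p`, with `B` and `C` independent sources of randomness,
depends only on the laws of the random points `X p (B ω)` and of the random field `U x (C ω)`. -/
lemma map_comp_congr_of_indepFun {Ω : Type*} {mΩ : MeasurableSpace Ω} {μ : Measure Ω}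
    [IsProbabilityMeasure μ] {β γ β' γ' T E R : Type*}
    [MeasurableSpace β] [MeasurableSpace γ] [MeasurableSpace β'] [MeasurableSpace γ']
    [MeasurableSpace E] [MeasurableSpace R]
    {B : Ω → β} {C : Ω → γ} {B' : Ω → β'} {C' : Ω → γ'}
    (hB : Measurable B) (hC : Measurable C) (hB' : Measurable B') (hC' : Measurable C')
    (h : IndepFun B C μ) (h' : IndepFun B' C' μ)
    {X : T → β → E} {X' : T → β' → E} {U : E → γ → R} {U' : E → γ' → R}
    (hX : ∀ p, Measurable (X p)) (hX' : ∀ p, Measurable (X' p))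
    (hU : Measurable fun q : E × γ => U q.1 q.2) (hU' : Measurable fun q : E × γ' => U' q.1 q.2)
    (eX : μ.map (fun ω p => X p (B ω)) = μ.map (fun ω p => X' p (B' ω)))
    (eU : μ.map (fun ω x => U x (C ω)) = μ.map (fun ω x => U' x (C' ω))) :
    μ.map (fun ω p => U (X p (B ω)) (C ω)) = μ.map (fun ω p => U' (X' p (B' ω)) (C' ω)) := by
  have := Measure.isProbabilityMeasure_map (μ := μ) hB.aemeasurable
  have := Measure.isProbabilityMeasure_map (μ := μ) hC.aemeasurable
  have := Measure.isProbabilityMeasure_map (μ := μ) hB'.aemeasurable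
  have := Measure.isProbabilityMeasure_map (μ := μ) hC'.aemeasurable
  have m1 : Measurable (fun (c : γ) x => U x c) :=
    measurable_pi_lambda _ fun x => hU.comp measurable_prodMk_left
  have m1' : Measurable (fun (c : γ') x => U' x c) :=
    measurable_pi_lambda _ fun x => hU'.comp measurable_prodMk_left
  have m2 : Measurable (fun (b : β) p => X p b) := measurable_pi_lambda _ hX
  have m2' : Measurable (fun (b : β') p => X' p b) := measurable_pi_lambda _ hX'
  have key := map_prod_comp_congr (μ.map B) (μ.map C) (μ.map B') (μ.map C') hX hX' hU hU'
    (by rw [Measure.map_map m2 hB, Measure.map_map m2' hB']; exact eX)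
    (by rw [Measure.map_map m1 hC, Measure.map_map m1' hC']; exact eU)
  rw [← (indepFun_iff_map_prod_eq_prod_map_map hB.aemeasurable hC.aemeasurable).1 h,
    ← (indepFun_iff_map_prod_eq_prod_map_map hB'.aemeasurable hC'.aemeasurable).1 h',
    Measure.map_map (measurable_decoupled hX hU) (hB.prodMk hC),
    Measure.map_map (measurable_decoupled hX' hU') (hB'.prodMk hC')] at key
  exact key

/-- The law of a random field evaluated at random points independent of it depends only on the
law of the field and the law of the points. Each source of randomness is `id` on `Ω`, with its
codomain carrying `H` or `G` as σ-algebra. -/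
lemma map_comp_congr {Ω : Type*} {H G H' G' mΩ : MeasurableSpace Ω} {μ : Measure Ω}
    [IsProbabilityMeasure μ] {T E R : Type*} [mE : MeasurableSpace E] [mR : MeasurableSpace R]
    (hH : H ≤ mΩ) (hG : G ≤ mΩ) (hH' : H' ≤ mΩ) (hG' : G' ≤ mΩ)
    (h : Indep H G μ) (h' : Indep H' G' μ)
    {X X' : T → Ω → E} {U U' : E → Ω → R}
    (hX : ∀ p, Measurable[H] (X p)) (hX' : ∀ p, Measurable[H'] (X' p))
    (hU : @Measurable (E × Ω) R (mE.prod G) _ fun q => U q.1 q.2)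
    (hU' : @Measurable (E × Ω) R (mE.prod G') _ fun q => U' q.1 q.2)
    (eX : μ.map (fun ω p => X p ω) = μ.map (fun ω p => X' p ω))
    (eU : μ.map (fun ω x => U x ω) = μ.map (fun ω x => U' x ω)) :
    μ.map (fun ω p => U (X p ω) ω) = μ.map (fun ω p => U' (X' p ω) ω) :=
  @map_comp_congr_of_indepFun Ω mΩ μ _ Ω Ω Ω Ω T E R H G H' G' mE mR id id id id
    (measurable_id'' hH) (measurable_id'' hG) (measurable_id'' hH') (measurable_id'' hG')
    ((IndepFun_iff_Indep (mβ := H) (mγ := G) id id μ).2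
      (by simpa only [MeasurableSpace.comap_id] using h))
    ((IndepFun_iff_Indep (mβ := H') (mγ := G') id id μ).2
      (by simpa only [MeasurableSpace.comap_id] using h'))
    X X' U U' hX hX' hU hU' eX eU

/-! ### σ-algebras generated by sets of indices -/

/-- The σ-algebra generated by the `F s` with `s ∈ S`: the information carried by `S`. -/
@[reducible] def sig {Ω ι : Type*} (F : ι → MeasurableSpace Ω) (S : Set ι) : MeasurableSpace Ω :=
  ⨆ s ∈ S, F s

lemma sig_mono {Ω ι : Type*} (F : ι → MeasurableSpace Ω) {S S' : Set ι} (h : S ⊆ S') :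
    sig F S ≤ sig F S' := biSup_mono h

lemma sig_le {Ω ι : Type*} {mΩ : MeasurableSpace Ω} {F : ι → MeasurableSpace Ω}
    (hF : ∀ i, F i ≤ mΩ) (S : Set ι) : sig F S ≤ mΩ := iSup₂_le fun i _ => hF i

lemma le_sig {Ω ι : Type*} (F : ι → MeasurableSpace Ω) {S : Set ι} {i : ι} (h : i ∈ S) :
    F i ≤ sig F S := le_biSup F h

lemma prod_sig_mono {E Ω ι : Type*} (mE : MeasurableSpace E) (F : ι → MeasurableSpace Ω)
    {S S' : Set ι} (h : S ⊆ S') : mE.prod (sig F S) ≤ mE.prod (sig F S') :=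
  sup_le_sup le_rfl (MeasurableSpace.comap_mono (sig_mono F h))

/-- Sums of random fields which are supported on pairwise disjoint blocks of indices, hence
independent: the law of the sum is determined by the laws of the summands. -/
lemma map_sum_congr {Ω ι J T : Type*} {mΩ : MeasurableSpace Ω} {μ : Measure Ω}
    [IsProbabilityMeasure μ] {F : ι → MeasurableSpace Ω} (hF : ∀ i, F i ≤ mΩ) (hind : iIndep F μ)
    {E E' : J → Set ι} (hE : Pairwise fun i j => Disjoint (E i) (E j))
    (hE' : Pairwise fun i j => Disjoint (E' i) (E' j))
    {Y Y' : J → Ω → T → ℝ} (hY : ∀ j, Measurable[sig F (E j)] (Y j))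
    (hY' : ∀ j, Measurable[sig F (E' j)] (Y' j))
    (e : ∀ j, μ.map (Y j) = μ.map (Y' j)) (s : Finset J) :
    μ.map (fun ω => ∑ j ∈ s, Y j ω) = μ.map (fun ω => ∑ j ∈ s, Y' j ω) := by
  classical
  have ms : ∀ (E : J → Set ι) (Y : J → Ω → T → ℝ), (∀ j, Measurable[sig F (E j)] (Y j)) →
      ∀ s : Finset J, Measurable[sig F (⋃ j ∈ s, E j)] (fun ω => ∑ j ∈ s, Y j ω) := by
    intro E Y hY s
    refine Finset.measurable_fun_sum s fun j hj => (hY j).mono (sig_mono F ?_) le_rfl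
    exact Set.subset_biUnion_of_mem (u := E) hj
  have disj : ∀ (E : J → Set ι), (Pairwise fun i j => Disjoint (E i) (E j)) →
      ∀ (a : J) (s : Finset J), a ∉ s → Disjoint (E a) (⋃ j ∈ s, E j) := by
    intro E hE a s ha
    refine Set.disjoint_iUnion₂_right.2 fun j hj => hE ?_
    rintro rfl
    exact ha hj
  induction s using Finset.induction_on with
  | empty => simp
  | insert a s ha ih =>
    simp only [Finset.sum_insert ha]
    have p := map_pair_congr ((hY a).mono (sig_le hF _) le_rfl)
      ((ms E Y hY s).mono (sig_le hF _) le_rfl) ((hY' a).mono (sig_le hF _) le_rfl)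
      ((ms E' Y' hY' s).mono (sig_le hF _) le_rfl)
      (indepFun_of_indep (indep_iSup_of_disjoint hF hind (disj E hE a s ha)) (hY a) (ms E Y hY s))
      (indepFun_of_indep (indep_iSup_of_disjoint hF hind (disj E' hE' a s ha)) (hY' a)
        (ms E' Y' hY' s)) (e a) ih
    refine map_congr_comp ?_ ?_ p (g := fun q : (T → ℝ) × (T → ℝ) => q.1 + q.2)
      (measurable_fst.add measurable_snd)
    · exact ((hY a).mono (sig_le hF _) le_rfl).prodMk ((ms E Y hY s).mono (sig_le hF _) le_rfl)
    · exact ((hY' a).mono (sig_le hF _) le_rfl).prodMk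
        ((ms E' Y' hY' s).mono (sig_le hF _) le_rfl)

/-! ### The index tree -/

/-- The strict descendants of `θ`. -/
def desc (θ : List ℤ) : Set (List ℤ) := {s | ∃ t, t ≠ [] ∧ s = θ ++ t}

/-- The indices that the summand of `V_n^θ` with label `(l, i)` depends on: all extensions of
`(θ, l, i + 1)` and of `(θ, -l, i + 1)`. -/
def block (θ : List ℤ) (j : Σ _ : ℕ, ℕ) : Set (List ℤ) :=
  {s | ∃ z : ℤ, z.natAbs = j.1 ∧ ∃ t, s = θ ++ ([z, (j.2 : ℤ) + 1] ++ t)}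

lemma block_disjoint (θ : List ℤ) :
    Pairwise fun i j : (Σ _ : ℕ, ℕ) => Disjoint (block θ i) (block θ j) := by
  rintro ⟨l, i⟩ ⟨l', i'⟩ hne
  refine Set.disjoint_left.2 ?_
  rintro s ⟨z, hz, t, rfl⟩ ⟨z', hz', t', h⟩
  simp only [List.append_cancel_left_eq, List.cons_append, List.cons.injEq, List.nil_append] at h
  obtain ⟨rfl, h2, -⟩ := h
  apply hne
  obtain rfl : l = l' := hz.symm.trans hz'
  obtain rfl : i = i' := by simpa using h2
  rfl

lemma block_subset_desc (θ : List ℤ) (j : Σ _ : ℕ, ℕ) : block θ j ⊆ desc θ := by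
  rintro s ⟨z, -, t, rfl⟩
  exact ⟨_, by simp, rfl⟩

lemma mem_block (θ : List ℤ) (l i : ℕ) : θ ++ [(l : ℤ), (i : ℤ) + 1] ∈ block θ ⟨l, i⟩ :=
  ⟨l, by simp, [], by simp⟩

lemma desc_subset_block (θ : List ℤ) (l i : ℕ) :
    desc (θ ++ [(l : ℤ), (i : ℤ) + 1]) ∪ desc (θ ++ [-(l : ℤ), (i : ℤ) + 1])
      ⊆ block θ ⟨l, i⟩ := by
  rintro s (⟨t, -, rfl⟩ | ⟨t, -, rfl⟩)
  · exact ⟨l, by simp, t, by simp⟩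
  · exact ⟨-l, by simp, t, by simp⟩

lemma self_disjoint (θ : List ℤ) (l i : ℕ) :
    Disjoint {θ ++ [(l : ℤ), (i : ℤ) + 1]}
      (desc (θ ++ [(l : ℤ), (i : ℤ) + 1]) ∪ desc (θ ++ [-(l : ℤ), (i : ℤ) + 1])) := by
  rw [Set.disjoint_singleton_left]
  rintro (⟨t, ht, h⟩ | ⟨t, ht, h⟩)
  all_goals
    have h1 := congrArg List.length h
    have h2 := List.length_pos_iff.2 ht
    simp only [List.length_append, List.length_cons, List.length_nil] at h1
    omega

lemma desc_disjoint (θ : List ℤ) {l : ℕ} (hl : l ≠ 0) (i : ℕ) :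
    Disjoint (desc (θ ++ [(l : ℤ), (i : ℤ) + 1])) (desc (θ ++ [-(l : ℤ), (i : ℤ) + 1])) := by
  refine Set.disjoint_left.2 ?_
  rintro s ⟨t, -, rfl⟩ ⟨t', -, h⟩
  simp only [List.append_assoc, List.append_cancel_left_eq, List.cons_append,
    List.cons.injEq] at h
  omega

/-! ### Laws of the approximations -/

/-- The random field `x ↦ f(x, v(x)) - 1_ℕ(l) f(x, w(x))` on `𝕏`; a summand of `V_n^θ` is this
field, with `v` and `w` approximations of lower level, evaluated at a random point. -/
def fld {𝕏 A Ω : Type*} (f : 𝕏 → (A → ℝ) → ℝ) (l : ℕ) (v w : 𝕏 → A → Ω → ℝ) (x : 𝕏) (ω : Ω) : ℝ :=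
  f x (fun b => v x b ω) - if l = 0 then 0 else f x (fun b => w x b ω)

lemma measurable_fld {𝕏 A Ω : Type*} [MeasurableSpace 𝕏] {G : MeasurableSpace Ω}
    {f : 𝕏 → (A → ℝ) → ℝ} (hf : Measurable fun p : 𝕏 × (A → ℝ) => f p.1 p.2) (l : ℕ)
    {v w : 𝕏 → A → Ω → ℝ} (hv : Measurable fun p : 𝕏 × Ω => fun b => v p.1 b p.2)
    (hw : Measurable fun p : 𝕏 × Ω => fun b => w p.1 b p.2) :
    Measurable fun p : 𝕏 × Ω => fld f l v w p.1 p.2 := by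
  have h1 := hf.comp (measurable_fst.prodMk hv)
  have h2 := hf.comp (measurable_fst.prodMk hw)
  unfold fld
  split_ifs
  · exact h1.sub measurable_const
  · exact h1.sub h2

lemma measurable_fld_comp {𝕏 A Ω : Type*} [MeasurableSpace 𝕏] {G : MeasurableSpace Ω}
    {X : 𝕏 → A → Ω → 𝕏} (hX : Measurable fun p : 𝕏 × Ω => fun b => X p.1 b p.2)
    {U : 𝕏 → Ω → ℝ} (hU : Measurable fun p : 𝕏 × Ω => U p.1 p.2) (a : A) :
    Measurable fun p : 𝕏 × Ω => U (X p.1 a p.2) p.2 :=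
  hU.comp (((measurable_pi_apply a).comp hX).prodMk measurable_snd)

/-- The recursion as a single sum over the labels `(l, i)`. -/
lemma recursion_sigma {𝕏 Ω A : Type*} {M : ℕ} {f : 𝕏 → (A → ℝ) → ℝ} {X : List ℤ → 𝕏 → A → Ω → 𝕏}
    {V : ℕ → List ℤ → 𝕏 → A → Ω → ℝ}
    (hV : ∀ (n : ℕ) (θ : List ℤ) (x : 𝕏) (a : A) (ω : Ω),
      V n θ x a ω =
        ∑ l ∈ Finset.range n, ((M : ℝ) ^ (n - l))⁻¹ *
          ∑ i ∈ Finset.range (M ^ (n - l)),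
            (f (X (θ ++ [(l : ℤ), (i : ℤ) + 1]) x a ω)
                (fun b => V l (θ ++ [(l : ℤ), (i : ℤ) + 1])
                  (X (θ ++ [(l : ℤ), (i : ℤ) + 1]) x a ω) b ω)
              - if l = 0 then 0 else
                f (X (θ ++ [(l : ℤ), (i : ℤ) + 1]) x a ω)
                  (fun b => V (l - 1) (θ ++ [-(l : ℤ), (i : ℤ) + 1])
                    (X (θ ++ [(l : ℤ), (i : ℤ) + 1]) x a ω) b ω)))
    (n : ℕ) (θ : List ℤ) (x : 𝕏) (a : A) (ω : Ω) :
    V n θ x a ω = ∑ j ∈ (Finset.range n).sigma fun l => Finset.range (M ^ (n - l)),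
      ((M : ℝ) ^ (n - j.1))⁻¹ *
        fld f j.1 (V j.1 (θ ++ [(j.1 : ℤ), (j.2 : ℤ) + 1]))
          (V (j.1 - 1) (θ ++ [-(j.1 : ℤ), (j.2 : ℤ) + 1]))
          (X (θ ++ [(j.1 : ℤ), (j.2 : ℤ) + 1]) x a ω) ω := by
  rw [hV, Finset.sum_sigma]
  refine Finset.sum_congr rfl fun l _ => ?_
  rw [Finset.mul_sum]
  rfl

section

variable {𝕏 : Type*} [mX : MeasurableSpace 𝕏] {Ω : Type*} {A : Type*} {M : ℕ}
    {F : List ℤ → MeasurableSpace Ω} {f : 𝕏 → (A → ℝ) → ℝ}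
    {X : List ℤ → 𝕏 → A → Ω → 𝕏} {V : ℕ → List ℤ → 𝕏 → A → Ω → ℝ}

/-- `V_n^θ` is jointly measurable in space and in the information of the strict descendants. -/
lemma measurable_V (hf : Measurable fun p : 𝕏 × (A → ℝ) => f p.1 p.2)
    (hXmeas : ∀ θ : List ℤ,
      @Measurable (𝕏 × Ω) (A → 𝕏) (mX.prod (F θ)) MeasurableSpace.pi
        fun p => fun a => X θ p.1 a p.2)
    (hV : ∀ (n : ℕ) (θ : List ℤ) (x : 𝕏) (a : A) (ω : Ω),
      V n θ x a ω = ∑ j ∈ (Finset.range n).sigma fun l => Finset.range (M ^ (n - l)),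
      ((M : ℝ) ^ (n - j.1))⁻¹ *
        fld f j.1 (V j.1 (θ ++ [(j.1 : ℤ), (j.2 : ℤ) + 1]))
          (V (j.1 - 1) (θ ++ [-(j.1 : ℤ), (j.2 : ℤ) + 1]))
          (X (θ ++ [(j.1 : ℤ), (j.2 : ℤ) + 1]) x a ω) ω)
    (n : ℕ) : ∀ θ : List ℤ, @Measurable (𝕏 × Ω) (A → ℝ) (mX.prod (sig F (desc θ)))
        MeasurableSpace.pi fun p a => V n θ p.1 a p.2 := by
  induction n using Nat.strong_induction_on with
  | _ n ih =>
    intro θ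
    refine @measurable_pi_lambda _ _ _ (mX.prod (sig F (desc θ))) _ _ fun a => ?_
    simp only [hV n θ]
    refine Finset.measurable_fun_sum _ ?_
    rintro ⟨l, i⟩ hj
    have hl : l < n := by simpa using (Finset.mem_sigma.1 hj).1
    have hsub := (desc_subset_block θ l i).trans (block_subset_desc θ _)
    refine Measurable.const_mul ?_ _
    refine measurable_fld_comp (G := sig F (desc θ)) ?_ (measurable_fld hf l ?_ ?_) a
    · exact (hXmeas _).mono (sup_le_sup le_rfl (MeasurableSpace.comap_mono
        (le_sig F (block_subset_desc θ _ (mem_block θ l i))))) le_rfl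
    · exact (ih l hl _).mono (prod_sig_mono mX F (Set.subset_union_left.trans hsub)) le_rfl
    · exact (ih (l - 1) (by omega) _).mono
        (prod_sig_mono mX F (Set.subset_union_right.trans hsub)) le_rfl

/-- The induction on `n` which shows that the law of `V_n^θ` does not depend on `θ`. -/
lemma map_V_congr {mΩ : MeasurableSpace Ω} {μ : Measure Ω} [IsProbabilityMeasure μ]
    (hFsub : ∀ θ, F θ ≤ mΩ) (hFindep : iIndep F μ)
    (hf : Measurable fun p : 𝕏 × (A → ℝ) => f p.1 p.2)
    (hXmeas : ∀ θ : List ℤ,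
      @Measurable (𝕏 × Ω) (A → 𝕏) (mX.prod (F θ)) MeasurableSpace.pi
        fun p => fun a => X θ p.1 a p.2)
    (hXid : ∀ θ η : List ℤ,
      Measure.map (fun ω => fun p : 𝕏 × A => X θ p.1 p.2 ω) μ
        = Measure.map (fun ω => fun p : 𝕏 × A => X η p.1 p.2 ω) μ)
    (hV : ∀ (n : ℕ) (θ : List ℤ) (x : 𝕏) (a : A) (ω : Ω),
      V n θ x a ω = ∑ j ∈ (Finset.range n).sigma fun l => Finset.range (M ^ (n - l)),
      ((M : ℝ) ^ (n - j.1))⁻¹ *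
        fld f j.1 (V j.1 (θ ++ [(j.1 : ℤ), (j.2 : ℤ) + 1]))
          (V (j.1 - 1) (θ ++ [-(j.1 : ℤ), (j.2 : ℤ) + 1]))
          (X (θ ++ [(j.1 : ℤ), (j.2 : ℤ) + 1]) x a ω) ω)
    (n : ℕ) : ∀ θ ϑ : List ℤ,
      Measure.map (fun ω => fun p : 𝕏 × A => V n θ p.1 p.2 ω) μ
        = Measure.map (fun ω => fun p : 𝕏 × A => V n ϑ p.1 p.2 ω) μ := by
  have mV := measurable_V (M := M) hf hXmeas hV
  have mVω : ∀ n θ, Measurable[sig F (desc θ)] (fun ω => fun p : 𝕏 × A => V n θ p.1 p.2 ω) :=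
    fun n θ => @measurable_pi_lambda _ _ _ (sig F (desc θ)) _ _ fun p =>
      (measurable_pi_apply p.2).comp ((mV n θ).comp (@measurable_prodMk_left _ _ _ _ p.1))
  have mX' : ∀ θ (p : 𝕏 × A), Measurable[sig F {θ}] (X θ p.1 p.2) := fun θ p =>
    ((measurable_pi_apply p.2).comp
      ((hXmeas θ).comp (@measurable_prodMk_left _ _ _ (F θ) p.1))).mono (le_sig F rfl) le_rfl
  induction n using Nat.strong_induction_on with
  | _ n ih =>
    let U : List ℤ → (Σ _ : ℕ, ℕ) → 𝕏 → Ω → ℝ := fun θ j =>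
      fld f j.1 (V j.1 (θ ++ [(j.1 : ℤ), (j.2 : ℤ) + 1]))
          (V (j.1 - 1) (θ ++ [-(j.1 : ℤ), (j.2 : ℤ) + 1]))
    let Z : List ℤ → (Σ _ : ℕ, ℕ) → Ω → 𝕏 × A → ℝ := fun θ j ω p =>
      U θ j (X (θ ++ [(j.1 : ℤ), (j.2 : ℤ) + 1]) p.1 p.2 ω) ω
    -- a vanishing coefficient for `l ≥ n` avoids carrying the range of `l` along
    let c : ℕ → ℝ := fun l => if l < n then ((M : ℝ) ^ (n - l))⁻¹ else 0
    have hVZ : ∀ θ, (fun ω => fun p : 𝕏 × A => V n θ p.1 p.2 ω) = fun ω =>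
        ∑ j ∈ (Finset.range n).sigma fun l => Finset.range (M ^ (n - l)), c j.1 • Z θ j ω := by
      intro θ
      funext ω p
      rw [hV n θ, Finset.sum_apply]
      refine Finset.sum_congr rfl fun j hj => ?_
      have hl : j.1 < n := by simpa using (Finset.mem_sigma.1 hj).1
      simp [c, hl, Z, U]
    have mU : ∀ (θ : List ℤ) (l i : ℕ), @Measurable (𝕏 × Ω) ℝ (mX.prod (sig F
        (desc (θ ++ [(l : ℤ), (i : ℤ) + 1]) ∪ desc (θ ++ [-(l : ℤ), (i : ℤ) + 1])))) _
        fun q => U θ ⟨l, i⟩ q.1 q.2 := by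
      intro θ l i
      refine measurable_fld (G := sig F _) hf l ?_ ?_
      · exact (mV l _).mono (prod_sig_mono mX F Set.subset_union_left) le_rfl
      · exact (mV (l - 1) _).mono (prod_sig_mono mX F Set.subset_union_right) le_rfl
    have mZ : ∀ θ j, Measurable[sig F (block θ j)] (Z θ j) := by
      rintro θ ⟨l, i⟩
      refine @measurable_pi_lambda _ _ _ (sig F (block θ ⟨l, i⟩)) _ _ fun p => ?_
      exact ((mU θ l i).mono (prod_sig_mono mX F (desc_subset_block θ l i)) le_rfl).comp
        (((mX' _ p).mono (sig_mono F (Set.singleton_subset_iff.2 (mem_block θ l i)))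
          le_rfl).prodMk (@measurable_id _ (sig F (block θ ⟨l, i⟩))))
    have eU : ∀ θ ϑ l i, l < n →
        μ.map (fun ω x => U θ ⟨l, i⟩ x ω) = μ.map (fun ω x => U ϑ ⟨l, i⟩ x ω) := by
      intro θ ϑ l i hl
      have mω : ∀ n θ, Measurable (fun ω => fun p : 𝕏 × A => V n θ p.1 p.2 ω) :=
        fun n θ => (mVω n θ).mono (sig_le hFsub _) le_rfl
      have hfx : ∀ x, Measurable fun v : 𝕏 × A → ℝ => f x fun b => v (x, b) := fun x =>
        hf.comp (measurable_const.prodMk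
          (measurable_pi_lambda _ fun b => measurable_pi_apply (x, b)))
      by_cases h0 : l = 0
      · -- for `l = 0` the two index sets coincide, but only the first field enters
        subst h0
        refine map_congr_comp (mω 0 _) (mω 0 _)
          (ih 0 hl (θ ++ [((0 : ℕ) : ℤ), (i : ℤ) + 1]) (ϑ ++ [((0 : ℕ) : ℤ), (i : ℤ) + 1]))
          (g := fun v x => f x (fun b => v (x, b)) - if (0 : ℕ) = 0 then 0 else 0) ?_
        exact measurable_pi_lambda _ fun x => (hfx x).sub measurable_const
      · have ind : ∀ θ, IndepFun
            (fun ω => fun p : 𝕏 × A => V l (θ ++ [(l : ℤ), (i : ℤ) + 1]) p.1 p.2 ω)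
            (fun ω => fun p : 𝕏 × A => V (l - 1) (θ ++ [-(l : ℤ), (i : ℤ) + 1]) p.1 p.2 ω) μ :=
          fun θ => indepFun_of_indep
            (indep_iSup_of_disjoint hFsub hFindep (desc_disjoint θ h0 i)) (mVω _ _) (mVω _ _)
        have p := map_pair_congr (mω l _) (mω (l - 1) _) (mω l _) (mω (l - 1) _) (ind θ) (ind ϑ)
          (ih l hl _ _) (ih (l - 1) (by omega) _ _)
        refine map_congr_comp ((mω _ _).prodMk (mω _ _)) ((mω _ _).prodMk (mω _ _)) p
          (g := fun v x => f x (fun b => v.1 (x, b))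
            - if l = 0 then 0 else f x (fun b => v.2 (x, b))) ?_
        simp only [h0, if_false]
        exact measurable_pi_lambda _ fun x =>
          ((hfx x).comp measurable_fst).sub ((hfx x).comp measurable_snd)
    have eZ : ∀ θ ϑ j, j.1 < n → μ.map (Z θ j) = μ.map (Z ϑ j) := by
      rintro θ ϑ ⟨l, i⟩ hl
      exact map_comp_congr (sig_le hFsub _) (sig_le hFsub _) (sig_le hFsub _) (sig_le hFsub _)
        (indep_iSup_of_disjoint hFsub hFindep (self_disjoint θ l i))
        (indep_iSup_of_disjoint hFsub hFindep (self_disjoint ϑ l i))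
        (X := fun p : 𝕏 × A => X (θ ++ [(l : ℤ), (i : ℤ) + 1]) p.1 p.2)
        (X' := fun p : 𝕏 × A => X (ϑ ++ [(l : ℤ), (i : ℤ) + 1]) p.1 p.2)
        (mX' _) (mX' _) (mU θ l i) (mU ϑ l i) (hXid _ _) (eU θ ϑ l i hl)
    intro θ ϑ
    rw [hVZ θ, hVZ ϑ]
    refine map_sum_congr hFsub hFindep (block_disjoint θ) (block_disjoint ϑ)
      (Y := fun j ω => c j.1 • Z θ j ω) (Y' := fun j ω => c j.1 • Z ϑ j ω)
      (fun j => Measurable.const_smul (mZ θ j) (c j.1))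
      (fun j => Measurable.const_smul (mZ ϑ j) (c j.1)) (fun j => ?_) _
    by_cases hj : j.1 < n
    · exact map_congr_comp ((mZ θ j).mono (sig_le hFsub _) le_rfl)
        ((mZ ϑ j).mono (sig_le hFsub _) le_rfl) (eZ θ ϑ j hj) (g := fun v => c j.1 • v)
        (measurable_const_smul (c j.1))
    · simp [c, hj]

end

end MLFP

/-- Distributional properties of the MLFP approximations (Lemma 3.3 of the paper).  In the MLFP
setting (the index set `Θ = ⋃_n ℤ^n` is modelled by `List ℤ`, `(θ,l,i)` by `θ ++ [l,i]`), for
every `n ∈ ℕ₀` the random fields `V_n^θ`, `θ ∈ Θ`, are identically distributed, i.e. the laws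
of `ω ↦ ((x,a) ↦ V_n^θ(x)(a)(ω))` on the product space `ℝ^{𝕏 × A}` coincide. -/
theorem stmt5
    {𝕏 : Type*} [mX : MeasurableSpace 𝕏] [Nonempty 𝕏]
    {Ω : Type*} [mΩ : MeasurableSpace Ω] (μ : Measure Ω) [IsProbabilityMeasure μ]
    {A : Type*} [Nonempty A]
    (M : ℕ)
    (F : List ℤ → MeasurableSpace Ω) (hFsub : ∀ θ, F θ ≤ mΩ)
    (hFindep : iIndep F μ)
    (f : 𝕏 → (A → ℝ) → ℝ)
    (hf : Measurable fun p : 𝕏 × (A → ℝ) => f p.1 p.2)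
    (X : List ℤ → 𝕏 → A → Ω → 𝕏)
    (hXmeas : ∀ θ : List ℤ,
      @Measurable (𝕏 × Ω) (A → 𝕏) (mX.prod (F θ)) MeasurableSpace.pi
        fun p => fun a => X θ p.1 a p.2)
    (hXid : ∀ θ η : List ℤ,
      Measure.map (fun ω => fun p : 𝕏 × A => X θ p.1 p.2 ω) μ
        = Measure.map (fun ω => fun p : 𝕏 × A => X η p.1 p.2 ω) μ)
    (V : ℕ → List ℤ → 𝕏 → A → Ω → ℝ)
    (hV : ∀ (n : ℕ) (θ : List ℤ) (x : 𝕏) (a : A) (ω : Ω),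
      V n θ x a ω =
        ∑ l ∈ Finset.range n, ((M : ℝ) ^ (n - l))⁻¹ *
          ∑ i ∈ Finset.range (M ^ (n - l)),
            (f (X (θ ++ [(l : ℤ), (i : ℤ) + 1]) x a ω)
                (fun b => V l (θ ++ [(l : ℤ), (i : ℤ) + 1])
                  (X (θ ++ [(l : ℤ), (i : ℤ) + 1]) x a ω) b ω)
              - if l = 0 then 0 else
                f (X (θ ++ [(l : ℤ), (i : ℤ) + 1]) x a ω)
                  (fun b => V (l - 1) (θ ++ [-(l : ℤ), (i : ℤ) + 1])
                    (X (θ ++ [(l : ℤ), (i : ℤ) + 1]) x a ω) b ω))) :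
    ∀ (n : ℕ) (θ ϑ : List ℤ),
      Measure.map (fun ω => fun p : 𝕏 × A => V n θ p.1 p.2 ω) μ
        = Measure.map (fun ω => fun p : 𝕏 × A => V n ϑ p.1 p.2 ω) μ := by
  exact MLFP.map_V_congr hFsub hFindep hf hXmeas hXid (MLFP.recursion_sigma hV)
end
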